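/- For every integer p, the homological Deligne complex functor A ↦ 𝒟_*(A,p), from homological Dolbeault complexes to complexes of real vector spaces, is exact: it carries short exact sequences of homological Dolbeault complexes (exact in each bidegree) to short exact sequences of complexes. -/

import Mathlib

/-!
# Statement 4

For every integer `p`, the homological Deligne complex functor `A ↦ 𝒟_*(A,p)`, from
homological Dolbeault complexes to complexes of real vector spaces, is exact: it carries short
exact sequences of homological Dolbeault complexes (exact in each bidegree) to short exact
sequences of complexes.
-/

/-- A homological Dolbeault complex `A = (A_*^ℝ, d_A)`: a bounded-above graded complex of real
vector spaces with complexification `M n = A_n^ℂ` carrying a bigrading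
`A_n^ℂ = ⊕_{p+q=n} A_{p,q}` (recorded by the projections `proj n p` onto `A_{p,n-p}`), whose
differential decomposes as `d = ∂ + ∂̄` with `∂` of type `(−1,0)` and `∂̄` of type `(0,−1)`,
and whose real structure (complex conjugation `conj`) satisfies `conj(A_{p,q}) = A_{q,p}`. -/
structure HomologicalDolbeaultComplex where
  /-- the complexification `A_n^ℂ` of the degree `n` part -/
  M : ℤ → Type
  [instAdd : ∀ n, AddCommGroup (M n)]
  [instMod : ∀ n, Module ℂ (M n)]
  /-- `proj n p` is the projection of `A_n^ℂ` onto the bigraded piece `A_{p,n-p}` -/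
  proj : ∀ _ : ℤ, ℤ → ∀ n', M n' →ₗ[ℂ] M n'
  proj_idem : ∀ n p x, proj n p n (proj n p n x) = proj n p n x
  proj_orth : ∀ n p q x, p ≠ q → proj n p n (proj n q n x) = 0
  proj_finite : ∀ n (x : M n), (Function.support fun p => proj n p n x).Finite
  proj_sum : ∀ n (x : M n), (finsum fun p => proj n p n x) = x
  /-- the complex is bounded from above -/
  bddAbove : ∃ N : ℤ, ∀ n, N < n → ∀ x : M n, x = 0
  /-- the operator `∂`, of type `(−1,0)`; `del i j = 0` unless `j = i − 1` -/
  del : ∀ i j : ℤ, M i →ₗ[ℂ] M j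
  /-- the operator `∂̄`, of type `(0,−1)`; `delbar i j = 0` unless `j = i − 1` -/
  delbar : ∀ i j : ℤ, M i →ₗ[ℂ] M j
  del_degree : ∀ i j, j ≠ i - 1 → del i j = 0
  delbar_degree : ∀ i j, j ≠ i - 1 → delbar i j = 0
  del_type : ∀ i j p x, del i j (proj i p i x) = proj j (p-1) j (del i j x)
  delbar_type : ∀ i j p x, delbar i j (proj i p i x) = proj j p j (delbar i j x)
  /-- `d_A = ∂ + ∂̄` squares to zero -/
  dsq : ∀ i j k (x : M i),
    del j k (del i j x) + delbar j k (del i j x) +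
      del j k (delbar i j x) + delbar j k (delbar i j x) = 0
  /-- complex conjugation (the real structure), a real-linear involution -/
  conj : ∀ n, M n →ₗ[ℝ] M n
  conj_smul : ∀ n (c : ℂ) (x : M n), conj n (c • x) = (starRingEnd ℂ) c • conj n x
  conj_invol : ∀ n x, conj n (conj n x) = x
  /-- the symmetry property `conj (A_{p,q}) = A_{q,p}` -/
  conj_proj : ∀ n p (x : M n), conj n (proj n p n x) = proj n (n - p) n (conj n x)
  /-- conjugation interchanges `∂` and `∂̄` -/
  conj_del : ∀ i j (x : M i), conj j (del i j x) = delbar i j (conj i x)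

attribute [instance] HomologicalDolbeaultComplex.instAdd HomologicalDolbeaultComplex.instMod

namespace HomologicalDolbeaultComplex

variable (A : HomologicalDolbeaultComplex)

/-- the projection `F_{k,k'}` onto `F_k ∩ F̄_{k'}`, i.e. onto the pieces `A_{l,n-l}` with
`l ≤ k` and `n − l ≤ k'` -/
noncomputable def Fband (n k k' : ℤ) (x : A.M n) : A.M n :=
  finsum fun l => if l ≤ k ∧ n - l ≤ k' then A.proj n l n x else 0

/-- membership in the real twist `A_n^ℝ(r) = (2πi)^{-r} A_n^ℝ`, i.e. `x̄ = (−1)^r x` -/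
def IsReal (r n : ℤ) (x : A.M n) : Prop := A.conj n x = ((-1:ℝ) ^ r) • x

/-- membership in `F_{k,k'} A_n = F_k A_n ∩ F̄_{k'} A_n` -/
def InFband (n k k' : ℤ) (x : A.M n) : Prop := A.Fband n k k' x = x

/-- membership in the homological Deligne complex
`𝒟_n(A,p) = A_{n+1}^ℝ(p+1) ∩ F_{n-p,n-p} A_{n+1}^ℂ`, for the range `n ≥ 2p+1` -/
def MemDeligneHigh (p n : ℤ) (x : A.M (n+1)) : Prop :=
  A.IsReal (p+1) (n+1) x ∧ A.InFband (n+1) (n-p) (n-p) x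

/-- membership in the homological Deligne complex
`𝒟_n(A,p) = A_n^ℝ(p) ∩ F_{p,p} A_n^ℂ`, for the range `n ≤ 2p` -/
def MemDeligneLow (p n : ℤ) (x : A.M n) : Prop :=
  A.IsReal p n x ∧ A.InFband n p p x

end HomologicalDolbeaultComplex

/-- A morphism of homological Dolbeault complexes: a degreewise `ℂ`-linear map compatible with
the bigrading, with `∂`, `∂̄` and with the real structures. -/
structure DolbeaultHom (A B : HomologicalDolbeaultComplex) where
  map : ∀ n, A.M n →ₗ[ℂ] B.M n
  map_proj : ∀ n p x, map n (A.proj n p n x) = B.proj n p n (map n x)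
  map_del : ∀ i j x, map j (A.del i j x) = B.del i j (map i x)
  map_delbar : ∀ i j x, map j (A.delbar i j x) = B.delbar i j (map i x)
  map_conj : ∀ n x, map n (A.conj n x) = B.conj n (map n x)

open HomologicalDolbeaultComplex

namespace HomologicalDolbeaultComplex

theorem aux_ext (A : HomologicalDolbeaultComplex) (n : ℤ) (x y : A.M n)
    (h : ∀ l, A.proj n l n x = A.proj n l n y) : x = y := by
  rw [← A.proj_sum n x, ← A.proj_sum n y]
  exact finsum_congr h

theorem aux_proj_Fband (A : HomologicalDolbeaultComplex) (n k k' l : ℤ) (x : A.M n) :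
    A.proj n l n (A.Fband n k k' x) = if l ≤ k ∧ n - l ≤ k' then A.proj n l n x else 0 := by
  have hfin : (Function.support fun m => if m ≤ k ∧ n - m ≤ k' then A.proj n m n x else 0).Finite := by
    refine (A.proj_finite n x).subset ?_
    intro m hm
    simp only [Function.mem_support] at hm ⊢
    intro h0
    apply hm
    simp [h0]
  unfold Fband
  have h1 := (A.proj n l n).toAddMonoidHom.map_finsum hfin
  simp only [LinearMap.toAddMonoidHom_coe] at h1
  rw [h1, finsum_eq_single _ l]
  · split_ifs
    · exact A.proj_idem n l x
    · simp
  · intro m hm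
    split_ifs
    · exact A.proj_orth n l m x (Ne.symm hm)
    · simp

theorem aux_inFband_iff (A : HomologicalDolbeaultComplex) (n k k' : ℤ) (x : A.M n) :
    A.InFband n k k' x ↔ ∀ l, ¬ (l ≤ k ∧ n - l ≤ k') → A.proj n l n x = 0 := by
  constructor
  · intro h l hl
    rw [← show A.Fband n k k' x = x from h, aux_proj_Fband, if_neg hl]
  · intro h
    apply aux_ext
    intro l
    rw [aux_proj_Fband]
    split_ifs with hl
    · rfl
    · exact (h l hl).symm

/-- the common form of the two membership conditions -/
def MemGen (A : HomologicalDolbeaultComplex) (r n k : ℤ) (x : A.M n) : Prop :=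
  A.IsReal r n x ∧ A.InFband n k k x

theorem aux_main
    (A B C : HomologicalDolbeaultComplex)
    (f : DolbeaultHom A B) (g : DolbeaultHom B C)
    (hinj : ∀ n q (x : A.M n), A.proj n q n x = x → f.map n x = 0 → x = 0)
    (hsurj : ∀ n q (z : C.M n), C.proj n q n z = z →
      ∃ y : B.M n, B.proj n q n y = y ∧ g.map n y = z)
    (hexact : ∀ n q (y : B.M n), B.proj n q n y = y → g.map n y = 0 →
      ∃ x : A.M n, A.proj n q n x = x ∧ f.map n x = y) (r n k : ℤ) :
    (∀ x : A.M n, A.MemGen r n k x → f.map n x = 0 → x = 0) ∧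
    (∀ x : A.M n, A.MemGen r n k x → B.MemGen r n k (f.map n x)) ∧
    (∀ y : B.M n, B.MemGen r n k y → C.MemGen r n k (g.map n y)) ∧
    (∀ z : C.M n, C.MemGen r n k z → ∃ y : B.M n, B.MemGen r n k y ∧ g.map n y = z) ∧
    (∀ y : B.M n, B.MemGen r n k y → g.map n y = 0 →
      ∃ x : A.M n, A.MemGen r n k x ∧ f.map n x = y) := by
  have inj0 : ∀ x : A.M n, f.map n x = 0 → x = 0 := by
    intro x hx
    apply aux_ext
    intro l
    rw [map_zero]
    apply hinj n l _ (A.proj_idem n l x)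
    rw [f.map_proj, hx, map_zero]
  have mapmem : ∀ (A B : HomologicalDolbeaultComplex) (f : DolbeaultHom A B) (x : A.M n),
      A.MemGen r n k x → B.MemGen r n k (f.map n x) := by
    intro A B f x ⟨h1, h2⟩
    refine ⟨?_, ?_⟩
    · unfold IsReal at *
      rw [← f.map_conj, h1, LinearMap.map_smul_of_tower]
    · rw [aux_inFband_iff] at *
      intro l hl
      rw [← f.map_proj, h2 l hl, map_zero]
  refine ⟨fun x _ => inj0 x, mapmem A B f, mapmem B C g, ?_, ?_⟩
  · intro z ⟨hz1, hz2⟩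
    have hs : ∃ y0 : B.M n, g.map n y0 = z := by
      choose Y hY1 hY2 using fun l => hsurj n l (C.proj n l n z) (C.proj_idem n l z)
      refine ⟨∑ l ∈ (C.proj_finite n z).toFinset, Y l, ?_⟩
      rw [map_sum, Finset.sum_congr rfl (fun l _ => hY2 l)]
      conv_rhs => rw [← C.proj_sum n z]
      exact (finsum_eq_sum _ _).symm
    obtain ⟨y0, hy0⟩ := hs
    have hgy1 : g.map n (B.Fband n k k y0) = z := by
      apply aux_ext
      intro l
      rw [← g.map_proj, aux_proj_Fband]
      split_ifs with hl
      · rw [g.map_proj, hy0]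
      · rw [map_zero, (aux_inFband_iff C n k k z).1 hz2 l hl]
    have hy1 : ∀ l, ¬ (l ≤ k ∧ n - l ≤ k) → B.proj n l n (B.Fband n k k y0) = 0 := by
      intro l hl
      rw [aux_proj_Fband, if_neg hl]
    generalize B.Fband n k k y0 = y1 at hgy1 hy1
    have hee : ((-1:ℝ)^r) * ((-1:ℝ)^r) = 1 := by
      rw [← mul_zpow]; simp
    unfold IsReal at hz1
    unfold MemGen IsReal
    generalize ((-1:ℝ)^r) = e at hee hz1 ⊢
    refine ⟨(1/2:ℝ) • (y1 + e • B.conj n y1), ⟨?_, ?_⟩, ?_⟩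
    · rw [map_smul, map_add, map_smul, B.conj_invol, smul_comm e, smul_add e, smul_smul e e, hee,
        one_smul, add_comm]
    · rw [aux_inFband_iff]
      intro l hl
      have h2 : B.proj n l n (B.conj n y1) = 0 := by
        have := B.conj_proj n (n - l) y1
        rw [hy1 (n - l) (by intro h; apply hl; constructor <;> linarith [h.1, h.2]), map_zero,
          sub_sub_cancel] at this
        exact this.symm
      rw [LinearMap.map_smul_of_tower, map_add, LinearMap.map_smul_of_tower, h2, hy1 l hl]
      simp
    · rw [LinearMap.map_smul_of_tower, map_add, LinearMap.map_smul_of_tower, g.map_conj, hgy1, hz1,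
        smul_smul, hee, one_smul, ← two_smul ℝ z, smul_smul]
      norm_num
  · intro y ⟨hy1, hy2⟩ hgy
    have hs : ∃ x : A.M n, f.map n x = y := by
      choose Y hY1 hY2 using fun l => hexact n l (B.proj n l n y) (B.proj_idem n l y)
        (by rw [g.map_proj, hgy, map_zero])
      refine ⟨∑ l ∈ (B.proj_finite n y).toFinset, Y l, ?_⟩
      rw [map_sum, Finset.sum_congr rfl (fun l _ => hY2 l)]
      conv_rhs => rw [← B.proj_sum n y]
      exact (finsum_eq_sum _ _).symm
    obtain ⟨x, rfl⟩ := hs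
    refine ⟨x, ⟨?_, ?_⟩, rfl⟩
    · unfold IsReal at *
      rw [← sub_eq_zero]
      apply inj0
      rw [map_sub, f.map_conj, hy1, LinearMap.map_smul_of_tower, sub_self]
    · rw [aux_inFband_iff] at *
      intro l hl
      apply inj0
      rw [f.map_proj, hy2 l hl]

end HomologicalDolbeaultComplex

/-- exactness of the homological Deligne complex functor.  Let
`0 → A → B → C → 0` be a short exact sequence of homological Dolbeault complexes, exact in
each bidegree (injectivity, surjectivity and exactness hold on each bigraded piece
`A_{p,n-p}`, the elements fixed by `proj n p`).  Then for every `p ∈ ℤ` the induced sequence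
of homological Deligne complexes `0 → 𝒟_*(A,p) → 𝒟_*(B,p) → 𝒟_*(C,p) → 0` is a short exact
sequence of complexes of real vector spaces: in each degree `n` (in either range `n ≥ 2p+1`
or `n ≤ 2p`) the induced maps on `𝒟_n(−,p)` are injective resp. surjective and exact. -/
theorem deligne_functor_exact
    (A B C : HomologicalDolbeaultComplex)
    (f : DolbeaultHom A B) (g : DolbeaultHom B C)
    -- exactness in each bidegree
    (hinj : ∀ n q (x : A.M n), A.proj n q n x = x → f.map n x = 0 → x = 0)
    (hsurj : ∀ n q (z : C.M n), C.proj n q n z = z →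
      ∃ y : B.M n, B.proj n q n y = y ∧ g.map n y = z)
    (hexact : ∀ n q (y : B.M n), B.proj n q n y = y → g.map n y = 0 →
      ∃ x : A.M n, A.proj n q n x = x ∧ f.map n x = y) :
    ∀ p n : ℤ,
      -- the range `n ≥ 2p+1`, where `𝒟_n(−,p) ⊆ (−)_{n+1}^ℂ`
      (2*p+1 ≤ n →
        (∀ x : A.M (n+1), A.MemDeligneHigh p n x → f.map (n+1) x = 0 → x = 0) ∧
        (∀ x : A.M (n+1), A.MemDeligneHigh p n x → B.MemDeligneHigh p n (f.map (n+1) x)) ∧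
        (∀ y : B.M (n+1), B.MemDeligneHigh p n y → C.MemDeligneHigh p n (g.map (n+1) y)) ∧
        (∀ z : C.M (n+1), C.MemDeligneHigh p n z →
          ∃ y : B.M (n+1), B.MemDeligneHigh p n y ∧ g.map (n+1) y = z) ∧
        (∀ y : B.M (n+1), B.MemDeligneHigh p n y → g.map (n+1) y = 0 →
          ∃ x : A.M (n+1), A.MemDeligneHigh p n x ∧ f.map (n+1) x = y)) ∧
      -- the range `n ≤ 2p`, where `𝒟_n(−,p) ⊆ (−)_n^ℂ`
      (n ≤ 2*p →
        (∀ x : A.M n, A.MemDeligneLow p n x → f.map n x = 0 → x = 0) ∧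
        (∀ x : A.M n, A.MemDeligneLow p n x → B.MemDeligneLow p n (f.map n x)) ∧
        (∀ y : B.M n, B.MemDeligneLow p n y → C.MemDeligneLow p n (g.map n y)) ∧
        (∀ z : C.M n, C.MemDeligneLow p n z →
          ∃ y : B.M n, B.MemDeligneLow p n y ∧ g.map n y = z) ∧
        (∀ y : B.M n, B.MemDeligneLow p n y → g.map n y = 0 →
          ∃ x : A.M n, A.MemDeligneLow p n x ∧ f.map n x = y)) := by
  intro p n
  exact ⟨fun _ => aux_main A B C f g hinj hsurj hexact (p+1) (n+1) (n-p),
    fun _ => aux_main A B C f g hinj hsurj hexact p n p⟩
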